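/- Let n, p ≥ 1 and let G be a finite subgroup of GL(n, ℂ). Let F₁, F₂ : ℂ[u₁,…,uₙ] → ℂ[[X₁,…,X_p]] be ℂ-algebra homomorphisms such that F₁(σ) = F₂(σ) for every G-invariant polynomial σ. Then there exists g ∈ G such that F₂(P) = F₁(g • P) for every polynomial P ∈ ℂ[u₁,…,uₙ]. -/

import Mathlib

/-!
Fix a polynomial `P` and consider `Q = ∏_{g ∈ G} (T - g • P)`, a polynomial in `T` whose
coefficients are `G`-invariant. Hence `F₁` and `F₂` send `Q` to the same polynomial over the power
series ring. Since `F₂ P` is a root of `∏_g (T - F₂ (g • P))`, it is a root of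
`∏_g (T - F₁ (g • P))`, and as power series form a domain, `F₂ P = F₁ (g • P)` for some `g`
depending on `P` (`exists_eq_glAct`).

To make `g` independent of `P`, note that for each `g` the set of `P` with `F₂ P = F₁ (g • P)` is a
linear subspace. These finitely many subspaces cover the whole polynomial ring, and a vector space
over an infinite field is not a finite union of proper subspaces.
-/

open MvPolynomial

/-- The action of `g ∈ GL(n, ℂ)` on polynomials by linear substitution:
`(g • P)(v) = P(g⁻¹ · v)`. -/
noncomputable def glAct {n : ℕ} (g : GL (Fin n) ℂ) :
    MvPolynomial (Fin n) ℂ →ₐ[ℂ] MvPolynomial (Fin n) ℂ :=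
  aeval fun i => ∑ j, C ((↑(g⁻¹) : Matrix (Fin n) (Fin n) ℂ) i j) * X j

lemma glAct_one {n : ℕ} (P : MvPolynomial (Fin n) ℂ) : glAct 1 P = P := by
  have h : glAct (1 : GL (Fin n) ℂ) = AlgHom.id ℂ _ := by
    ext1 i
    simp [glAct, Matrix.one_apply]
  simp [h]

lemma glAct_mul {n : ℕ} (g h : GL (Fin n) ℂ) (P : MvPolynomial (Fin n) ℂ) :
    glAct (g * h) P = glAct g (glAct h P) := by
  have key : glAct (g * h) = (glAct g).comp (glAct h) := by
    ext1 i
    simp only [glAct, AlgHom.comp_apply, aeval_X, map_sum, map_mul, mul_inv_rev, Units.val_mul,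
      Matrix.mul_apply, algHom_C, algebraMap_eq, Finset.sum_mul, Finset.mul_sum]
    rw [Finset.sum_comm]
    simp only [mul_assoc]
  simp [key]

/-- The pointwise form of the theorem, in which the group element may depend on `P`. -/
lemma exists_eq_glAct {n : ℕ} {R : Type*} [CommRing R] [IsDomain R] [Algebra ℂ R]
    (G : Subgroup (GL (Fin n) ℂ)) [Fintype G]
    (F₁ F₂ : MvPolynomial (Fin n) ℂ →ₐ[ℂ] R)
    (hF : ∀ σ : MvPolynomial (Fin n) ℂ, (∀ g ∈ G, glAct g σ = σ) → F₁ σ = F₂ σ)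
    (P : MvPolynomial (Fin n) ℂ) : ∃ g : G, F₂ P = F₁ (glAct (g : GL (Fin n) ℂ) P) := by
  let Q : Polynomial (MvPolynomial (Fin n) ℂ) :=
    ∏ g : G, (Polynomial.X - Polynomial.C (glAct (g : GL (Fin n) ℂ) P))
  have hQ_inv : ∀ h ∈ G, Q.map (glAct h : _ →+* MvPolynomial (Fin n) ℂ) = Q := by
    intro h hh
    simp only [Q, Polynomial.map_prod, Polynomial.map_sub, Polynomial.map_X, Polynomial.map_C,
      RingHom.coe_coe, ← glAct_mul]
    exact Fintype.prod_equiv (Equiv.mulLeft (⟨h, hh⟩ : G)) _ _ fun g => by simp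
  have hQ : Q.map (F₁ : _ →+* R) = Q.map (F₂ : _ →+* R) := by
    ext k
    simp only [Polynomial.coeff_map, RingHom.coe_coe]
    refine hF _ fun h hh => ?_
    conv_rhs => rw [← hQ_inv h hh]
    simp
  have hroot : (Q.map (F₂ : _ →+* R)).eval (F₂ P) = 0 := by
    simp only [Q, Polynomial.map_prod, Polynomial.eval_prod]
    exact Finset.prod_eq_zero (Finset.mem_univ (1 : G)) (by simp [glAct_one])
  rw [← hQ] at hroot
  simp only [Q, Polynomial.map_prod, Polynomial.eval_prod, Finset.prod_eq_zero_iff] at hroot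
  obtain ⟨g, -, hg⟩ := hroot
  exact ⟨g, by simpa [sub_eq_zero] using hg⟩

theorem stmt1 (n p : ℕ) (hn : 1 ≤ n) (hp : 1 ≤ p)
    (G : Subgroup (GL (Fin n) ℂ)) (hGfin : (G : Set (GL (Fin n) ℂ)).Finite)
    (F₁ F₂ : MvPolynomial (Fin n) ℂ →ₐ[ℂ] MvPowerSeries (Fin p) ℂ)
    (hF : ∀ σ : MvPolynomial (Fin n) ℂ,
      (∀ g ∈ G, glAct g σ = σ) → F₁ σ = F₂ σ) :
    ∃ g ∈ G, ∀ P : MvPolynomial (Fin n) ℂ, F₂ P = F₁ (glAct g P) := by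
  have : IsDomain (MvPowerSeries (Fin p) ℂ) := NoZeroDivisors.to_isDomain _
  have : Fintype G := hGfin.fintype
  let V : G → Submodule ℂ (MvPolynomial (Fin n) ℂ) := fun g =>
    LinearMap.eqLocus F₂.toLinearMap (F₁.comp (glAct (g : GL (Fin n) ℂ))).toLinearMap
  have hV : ⋃ g, (V g : Set (MvPolynomial (Fin n) ℂ)) = Set.univ := by
    refine Set.eq_univ_of_forall fun P => Set.mem_iUnion.2 ?_
    obtain ⟨g, hg⟩ := exists_eq_glAct G F₁ F₂ hF P
    exact ⟨g, hg⟩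
  obtain ⟨g, hg⟩ := Subspace.exists_eq_top_of_iUnion_eq_univ hV
  refine ⟨g, g.2, fun P => ?_⟩
  have hP : P ∈ V g := hg ▸ Submodule.mem_top
  exact hP
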